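/- Let P_1, ..., P_n be lattice polytopes in R^n, and suppose P_1, ..., P_k (1 ≤ k ≤ n) are contained in a k-dimensional rational linear subspace L of R^n. Then MV(P_1,...,P_n) = MV_L(P_1,...,P_k) · MV(π(P_{k+1}), ..., π(P_n)), where π is the lattice projection of R^n along L and the mixed volumes on the right are computed with respect to the induced lattices. -/

import Mathlib

open scoped Pointwise
open MeasureTheory Finset

def IsLatticePt {n : ℕ} (x : Fin n → ℝ) : Prop := ∀ i, ∃ z : ℤ, x i = (z : ℝ)

def IsLatticePolytope {n : ℕ} (P : Set (Fin n → ℝ)) : Prop :=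
  ∃ V : Finset (Fin n → ℝ), V.Nonempty ∧ (∀ v ∈ V, IsLatticePt v) ∧
    P = convexHull ℝ (V : Set (Fin n → ℝ))

noncomputable def adim {n : ℕ} (A : Set (Fin n → ℝ)) : ℕ :=
  Module.finrank ℝ (affineSpan ℝ A).direction

def relintLat {n : ℕ} (A : Set (Fin n → ℝ)) : Set (Fin n → ℝ) :=
  {x ∈ intrinsicInterior ℝ A | IsLatticePt x}

def intLat {n : ℕ} (A : Set (Fin n → ℝ)) : Set (Fin n → ℝ) :=
  {x ∈ interior A | IsLatticePt x}

noncomputable def mixedVol {n m : ℕ} (P : Fin m → Set (Fin n → ℝ)) : ℝ :=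
  ∑ I : Finset (Fin m), (-1 : ℝ) ^ (m - I.card) * (volume (∑ i ∈ I, P i)).toReal

/-!
For a nonempty finite `A ⊆ ℝⁿ`, the gradient of `x ↦ log ∑ a ∈ A, exp (b a + a ⬝ᵥ x)` takes values
in `conv A`, and its Jacobian at `x` is the covariance matrix of `A` under the Gibbs weights at `x`.
The range of a sum of such moment maps contains the interior of the Minkowski sum of the polytopes,
and the sum is injective when that interior is nonempty, so the volume of the Minkowski sum is the
integral of the determinant of the sum of the covariance matrices. By inclusion–exclusion over the
summands, the mixed volume is the integral of the mixed discriminant of the covariance matrices,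
whatever `b` is. If the first `k` polytopes lie in a coordinate `k`-space, the mixed discriminant
factors; integrating over the remaining coordinates first splits off the mixed volume of the
projections, because there the first `k` coordinates only shift `b`.
-/

section Softmax

variable {α : Type*} [Fintype α]

/-- The log-sum-exp function, a smooth convex upper approximation of `max`. -/
noncomputable def logSumExp (θ : α → ℝ) : ℝ := Real.log (∑ a, Real.exp (θ a))

/-- The softmax map: the Gibbs weights with energies `-θ`, that is, the gradient of `logSumExp`. -/
noncomputable def softmax (θ : α → ℝ) (a : α) : ℝ := Real.exp (θ a) / ∑ b, Real.exp (θ b)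

lemma sum_exp_pos [Nonempty α] (θ : α → ℝ) : 0 < ∑ a, Real.exp (θ a) :=
  sum_pos (fun a _ => Real.exp_pos (θ a)) univ_nonempty

lemma softmax_pos [Nonempty α] (θ : α → ℝ) (a : α) : 0 < softmax θ a :=
  div_pos (Real.exp_pos _) (sum_exp_pos θ)

lemma sum_softmax [Nonempty α] (θ : α → ℝ) : ∑ a, softmax θ a = 1 := by
  simp only [softmax, ← sum_div, div_self (sum_exp_pos θ).ne']

lemma softmax_eq_exp_sub_logSumExp [Nonempty α] (θ : α → ℝ) (a : α) :
    softmax θ a = Real.exp (θ a - logSumExp θ) := by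
  rw [logSumExp, Real.exp_sub, Real.exp_log (sum_exp_pos θ), softmax]

lemma le_logSumExp (θ : α → ℝ) (a : α) : θ a ≤ logSumExp θ := by
  rw [logSumExp, ← Real.log_exp (θ a)]
  exact Real.log_le_log (Real.exp_pos _)
    (single_le_sum (fun b _ => (Real.exp_pos (θ b)).le) (mem_univ a))

lemma hasFDerivAt_logSumExp [Nonempty α] (θ : α → ℝ) :
    HasFDerivAt logSumExp
      (∑ a, softmax θ a • ContinuousLinearMap.proj (R := ℝ) (φ := fun _ : α => ℝ) a) θ := by
  have hsum : HasFDerivAt (fun θ : α → ℝ => ∑ a, Real.exp (θ a))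
      (∑ a, Real.exp (θ a) • ContinuousLinearMap.proj (R := ℝ) (φ := fun _ : α => ℝ) a) θ :=
    HasFDerivAt.fun_sum fun a _ => (hasFDerivAt_apply a θ).exp
  refine (hsum.log (sum_exp_pos θ).ne').congr_fderiv ?_
  simp only [smul_sum, smul_smul, softmax, div_eq_inv_mul]

end Softmax

section WeightCov

open scoped Matrix

variable {α : Type*} [Fintype α] [DecidableEq α] {w : α → ℝ}

/-- The covariance matrix of the unit vectors `Pi.single a 1` taken with weights `w a`. At
`w = softmax θ` it is the Hessian of `logSumExp`. -/
def weightCov (w : α → ℝ) : Matrix α α ℝ := Matrix.diagonal w - Matrix.vecMulVec w w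

lemma weightCov_mulVec (w u : α → ℝ) (a : α) :
    (weightCov w *ᵥ u) a = w a * (u a - w ⬝ᵥ u) := by
  simp [weightCov, Matrix.sub_mulVec, Matrix.mulVec_diagonal, Matrix.vecMulVec_mulVec, mul_sub,
    mul_comm]

lemma dotProduct_weightCov_mulVec (hw : ∑ a, w a = 1) (u : α → ℝ) :
    u ⬝ᵥ (weightCov w *ᵥ u) = ∑ a, w a * (u a - w ⬝ᵥ u) ^ 2 := by
  have hmean : ∑ a, w a * (u a - w ⬝ᵥ u) = 0 := by
    simp only [mul_sub, sum_sub_distrib, ← sum_mul, hw, one_mul]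
    exact sub_self _
  calc u ⬝ᵥ (weightCov w *ᵥ u)
      = ∑ a, w a * (u a - w ⬝ᵥ u) ^ 2 + (w ⬝ᵥ u) * ∑ a, w a * (u a - w ⬝ᵥ u) := by
        simp only [dotProduct, weightCov_mulVec, mul_sum, ← sum_add_distrib]
        exact sum_congr rfl fun a _ => by ring
    _ = _ := by rw [hmean, mul_zero, add_zero]

lemma posSemidef_weightCov (hw : ∑ a, w a = 1) (hpos : ∀ a, 0 ≤ w a) :
    (weightCov w).PosSemidef := by
  have hherm : (weightCov w).IsHermitian := (Matrix.isHermitian_diagonal w).sub <|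
    Matrix.IsHermitian.ext fun i j => by simp [Matrix.vecMulVec_apply, mul_comm]
  refine .of_dotProduct_mulVec_nonneg hherm fun u => ?_
  rw [star_trivial, dotProduct_weightCov_mulVec hw]
  exact sum_nonneg fun a _ => mul_nonneg (hpos a) (sq_nonneg _)

lemma weightCov_mulVec_eq_zero_iff (hw : ∑ a, w a = 1) (hpos : ∀ a, 0 < w a) (u : α → ℝ) :
    weightCov w *ᵥ u = 0 ↔ ∀ a b, u a = u b := by
  simp only [funext_iff, weightCov_mulVec, Pi.zero_apply, mul_eq_zero, (hpos _).ne', false_or,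
    sub_eq_zero]
  refine ⟨fun h a b => (h a).trans (h b).symm, fun h a => ?_⟩
  calc u a = ∑ b, w b * u a := by rw [← sum_mul, hw, one_mul]
    _ = w ⬝ᵥ u := sum_congr rfl fun b _ => by rw [h a b]

lemma hasFDerivAt_softmax [Nonempty α] (θ : α → ℝ) :
    HasFDerivAt softmax (LinearMap.toContinuousLinearMap (weightCov (softmax θ)).mulVecLin) θ := by
  rw [hasFDerivAt_pi']
  intro a
  simp only [softmax_eq_exp_sub_logSumExp]
  refine (((hasFDerivAt_apply a θ).sub (hasFDerivAt_logSumExp θ)).exp).congr_fderiv ?_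
  ext1 u
  simp [← softmax_eq_exp_sub_logSumExp, weightCov_mulVec, dotProduct]

end WeightCov

section Gradient

open scoped Matrix

variable {E : Type*} [NormedAddCommGroup E] [NormedSpace ℝ E] [FiniteDimensional ℝ E]
  {ι : Type*} [Fintype ι]

-- If `φ` is interior to `K`, then `f - φ` grows at least like a multiple of the norm, so it has a
-- minimum, and there `f' = φ`.
lemma interior_subset_range_of_hasFDerivAt {f : E → ℝ} {f' : E → StrongDual ℝ E}
    (hf : ∀ x, HasFDerivAt f (f' x) x) {K : Set (StrongDual ℝ E)} {C : ℝ}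
    (hK : ∀ φ ∈ K, ∀ x, φ x ≤ f x + C) : interior K ⊆ Set.range f' := by
  intro φ hφ
  obtain ⟨ε, hε, hball⟩ :=
    Metric.nhds_basis_closedBall.mem_iff.1 (mem_interior_iff_mem_nhds.1 hφ)
  have hderiv (x : E) : HasFDerivAt (fun x => f x - φ x) (f' x - φ) x := (hf x).sub φ.hasFDerivAt
  have hlower (x : E) : ε * ‖x‖ - C ≤ f x - φ x := by
    obtain ⟨ψ, hψ, hψx⟩ := exists_dual_vector'' ℝ x
    have hmem : φ + ε • ψ ∈ K := hball <| by
      rw [mem_closedBall_iff_norm, add_sub_cancel_left, norm_smul, Real.norm_of_nonneg hε.le]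
      exact mul_le_of_le_one_right hε.le hψ
    have := hK _ hmem x
    simp only [_root_.add_apply, _root_.smul_apply, hψx, smul_eq_mul, RCLike.ofReal_real_eq_id,
      id_eq] at this
    linarith
  have hcoercive : Filter.Tendsto (fun x => f x - φ x) (Filter.cocompact E) Filter.atTop :=
    Filter.tendsto_atTop_mono hlower <| Filter.tendsto_atTop_add_const_right _ _ <|
      (tendsto_norm_cocompact_atTop (E := E)).const_mul_atTop hε
  have hcont : Continuous fun x => f x - φ x :=
    continuous_iff_continuousAt.2 fun x => (hderiv x).continuousAt
  obtain ⟨x, hx⟩ := hcont.exists_forall_le hcoercive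
  exact ⟨x, sub_eq_zero.1 <|
    IsLocalMin.hasFDerivAt_eq_zero (Filter.Eventually.of_forall hx) (hderiv x)⟩

/-- The identification of `ι → ℝ` with its dual through the dot product; it turns gradients into
derivatives. -/
noncomputable def dotProductDual : (ι → ℝ) ≃L[ℝ] StrongDual ℝ (ι → ℝ) :=
  open scoped Classical in
  ((dotProductEquiv ℝ ι).trans LinearMap.toContinuousLinearMap).toContinuousLinearEquiv

lemma dotProductDual_apply (y x : ι → ℝ) : dotProductDual y x = y ⬝ᵥ x := rfl

lemma interior_subset_range_gradient {f : (ι → ℝ) → ℝ} {F : (ι → ℝ) → ι → ℝ}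
    (hf : ∀ x, HasFDerivAt f (dotProductDual (F x)) x) {K : Set (ι → ℝ)} {C : ℝ}
    (hK : ∀ y ∈ K, ∀ x, y ⬝ᵥ x ≤ f x + C) : interior K ⊆ Set.range F := by
  intro y hy
  have hy' : dotProductDual y ∈ interior (dotProductDual '' K) := by
    rw [← ContinuousLinearEquiv.coe_toHomeomorph, ← Homeomorph.image_interior]
    exact Set.mem_image_of_mem _ hy
  obtain ⟨x, hx⟩ := interior_subset_range_of_hasFDerivAt hf
    (Set.forall_mem_image.2 fun y hy x => hK y hy x) hy'
  exact ⟨x, dotProductDual.injective hx⟩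

lemma injective_of_hasFDerivAt_posDef {F : (ι → ℝ) → ι → ℝ} {H : (ι → ℝ) → Matrix ι ι ℝ}
    (hF : ∀ x, HasFDerivAt F (LinearMap.toContinuousLinearMap (H x).mulVecLin) x)
    (hH : ∀ x, (H x).PosDef) : Function.Injective F := by
  intro x y hxy
  by_contra hne
  set u := y - x with hu
  have hderiv (t : ℝ) : HasDerivAt (fun t : ℝ => u ⬝ᵥ F (x + t • u))
      (u ⬝ᵥ (H (x + t • u) *ᵥ u)) t := by
    have hline : HasDerivAt (fun t : ℝ => x + t • u) u t := by
      simpa using ((hasDerivAt_id t).smul_const u).const_add x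
    exact (dotProductDual u).hasFDerivAt.comp_hasDerivAt t ((hF _).comp_hasDerivAt t hline)
  have hmono : StrictMono fun t : ℝ => u ⬝ᵥ F (x + t • u) := strictMono_of_deriv_pos fun t => by
    simpa only [(hderiv t).deriv, star_trivial] using
      (hH _).dotProduct_mulVec_pos (sub_ne_zero.2 (Ne.symm hne))
  have hlt := hmono zero_lt_one
  simp only [zero_smul, add_zero, one_smul, hu, add_sub_cancel, hxy, lt_irrefl] at hlt

end Gradient

section MomentMap

open scoped Matrix

variable {ι α : Type*} [Fintype ι]

lemma hasFDerivAt_add_mulVec [Finite α] (b : α → ℝ) (P : Matrix α ι ℝ) (x : ι → ℝ) :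
    HasFDerivAt (fun x => b + P *ᵥ x) (LinearMap.toContinuousLinearMap P.mulVecLin) x := by
  have := Fintype.ofFinite α
  exact (LinearMap.toContinuousLinearMap P.mulVecLin).hasFDerivAt.const_add b

variable [Fintype α]

/-- The moment map of the exponential sum `∑ a, exp (b a + P a ⬝ᵥ x)`, whose exponents are the rows
of `P`: the gradient of the logarithm of that sum. -/
noncomputable def momentMap (b : α → ℝ) (P : Matrix α ι ℝ) (x : ι → ℝ) : ι → ℝ :=
  softmax (b + P *ᵥ x) ᵥ* P

/-- The Jacobian matrix of `momentMap b P` at `x`: the covariance matrix of the rows of `P` under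
the softmax weights. -/
noncomputable def momentHessian [DecidableEq α] (b : α → ℝ) (P : Matrix α ι ℝ) (x : ι → ℝ) :
    Matrix ι ι ℝ :=
  Pᵀ * weightCov (softmax (b + P *ᵥ x)) * P

lemma dotProduct_le_logSumExp_add (b : α → ℝ) {P : Matrix α ι ℝ} (x : ι → ℝ) {z : ι → ℝ}
    (hz : z ∈ convexHull ℝ (Set.range P.row)) :
    z ⬝ᵥ x ≤ logSumExp (b + P *ᵥ x) + ∑ a, |b a| := by
  have hconvex : Convex ℝ {z | z ⬝ᵥ x ≤ logSumExp (b + P *ᵥ x) + ∑ a, |b a|} :=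
    convex_halfSpace_le ⟨fun y z => add_dotProduct y z x, fun r y => smul_dotProduct r y x⟩ _
  refine convexHull_min (Set.range_subset_iff.2 fun a => ?_) hconvex hz
  have hmax : b a + P.row a ⬝ᵥ x ≤ logSumExp (b + P *ᵥ x) := le_logSumExp (b + P *ᵥ x) a
  have habs : |b a| ≤ ∑ a, |b a| :=
    single_le_sum (f := fun a => |b a|) (fun a _ => abs_nonneg (b a)) (mem_univ a)
  exact Set.mem_ofPred.2 (by linarith [neg_abs_le (b a)])

variable [Nonempty α] (b : α → ℝ) (P : Matrix α ι ℝ) (x : ι → ℝ)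

lemma momentMap_mem_convexHull : momentMap b P x ∈ convexHull ℝ (Set.range P.row) := by
  rw [momentMap, Matrix.vecMul_eq_sum]
  exact (convex_convexHull ℝ _).sum_mem (fun a _ => (softmax_pos _ a).le) (sum_softmax _)
    fun a _ => subset_convexHull ℝ _ (Set.mem_range_self a)

lemma hasFDerivAt_logSumExp_add_mulVec :
    HasFDerivAt (fun x => logSumExp (b + P *ᵥ x)) (dotProductDual (momentMap b P x)) x := by
  refine ((hasFDerivAt_logSumExp _).comp x (hasFDerivAt_add_mulVec b P x)).congr_fderiv ?_
  ext1 u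
  rw [dotProductDual_apply, momentMap, ← Matrix.dotProduct_mulVec]
  simp [dotProduct]

variable [DecidableEq α]

lemma hasFDerivAt_momentMap :
    HasFDerivAt (momentMap b P)
      (LinearMap.toContinuousLinearMap (momentHessian b P x).mulVecLin) x := by
  refine ((LinearMap.toContinuousLinearMap P.vecMulLinear).hasFDerivAt.comp x
    ((hasFDerivAt_softmax _).comp x (hasFDerivAt_add_mulVec b P x))).congr_fderiv ?_
  ext1 u
  simp [momentHessian]

lemma posSemidef_momentHessian : (momentHessian b P x).PosSemidef := by
  simpa only [momentHessian, Matrix.conjTranspose_eq_transpose_of_trivial] using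
    (posSemidef_weightCov (sum_softmax _) fun a =>
      (softmax_pos _ a).le).conjTranspose_mul_mul_same P

lemma dotProduct_momentHessian_mulVec_eq_zero_iff (u : ι → ℝ) :
    u ⬝ᵥ (momentHessian b P x *ᵥ u) = 0 ↔ ∀ a a', (P *ᵥ u) a = (P *ᵥ u) a' := by
  have hcov := posSemidef_weightCov (sum_softmax (b + P *ᵥ x)) fun a => (softmax_pos _ a).le
  rw [← weightCov_mulVec_eq_zero_iff (sum_softmax (b + P *ᵥ x)) (softmax_pos _),
    ← hcov.dotProduct_mulVec_zero_iff, star_trivial, momentHessian, ← Matrix.mulVec_mulVec,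
    ← Matrix.mulVec_mulVec, Matrix.mulVec_transpose, dotProduct_comm, ← Matrix.dotProduct_mulVec,
    dotProduct_comm]

end MomentMap

section MinkowskiSum

open scoped Matrix

lemma isCompact_finsetSum {E κ : Type*} [AddCommMonoid E] [TopologicalSpace E] [ContinuousAdd E]
    {K : κ → Set E} (I : Finset κ) (hK : ∀ i ∈ I, IsCompact (K i)) : IsCompact (∑ i ∈ I, K i) :=
  sum_induction K IsCompact (fun _ _ => IsCompact.add) isCompact_singleton hK

variable {ι κ : Type*} [Fintype ι] {α : κ → Type*} [∀ i, Fintype (α i)]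
  [∀ i, Nonempty (α i)] (I : Finset κ) (b : ∀ i, α i → ℝ) (P : ∀ i, Matrix (α i) ι ℝ)

lemma range_sum_momentMap_subset :
    (Set.range fun x => ∑ i ∈ I, momentMap (b i) (P i) x) ⊆
      ∑ i ∈ I, convexHull ℝ (Set.range (P i).row) :=
  Set.range_subset_iff.2 fun x =>
    Set.finsetSum_mem_finsetSum _ _ _ fun i _ => momentMap_mem_convexHull (b i) (P i) x

lemma interior_sum_convexHull_subset_range :
    interior (∑ i ∈ I, convexHull ℝ (Set.range (P i).row)) ⊆
      Set.range fun x => ∑ i ∈ I, momentMap (b i) (P i) x := by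
  refine interior_subset_range_gradient (f := fun x => ∑ i ∈ I, logSumExp (b i + P i *ᵥ x))
    (C := ∑ i ∈ I, ∑ a, |b i a|) (fun x => ?_) fun y hy x => ?_
  · rw [map_sum]
    exact HasFDerivAt.fun_sum fun i _ => hasFDerivAt_logSumExp_add_mulVec (b i) (P i) x
  · obtain ⟨z, hz, rfl⟩ := (Set.mem_finsetSum _ _ _).1 hy
    rw [sum_dotProduct, ← sum_add_distrib]
    exact sum_le_sum fun i hi => dotProduct_le_logSumExp_add (b i) x (hz hi)

lemma volume_range_sum_momentMap :
    volume (Set.range fun x => ∑ i ∈ I, momentMap (b i) (P i) x) =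
      volume (∑ i ∈ I, convexHull ℝ (Set.range (P i).row)) := by
  have hconvex : Convex ℝ (∑ i ∈ I, convexHull ℝ (Set.range (P i).row)) :=
    convex_sum _ fun i _ => convex_convexHull ℝ _
  refine (measure_mono (range_sum_momentMap_subset I b P)).antisymm ?_
  rw [← measure_congr (interior_ae_eq_of_null_frontier (hconvex.addHaar_frontier volume))]
  exact measure_mono (interior_sum_convexHull_subset_range I b P)

variable [∀ i, DecidableEq (α i)]

lemma hasFDerivAt_sum_momentMap (x : ι → ℝ) :
    HasFDerivAt (fun x => ∑ i ∈ I, momentMap (b i) (P i) x)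
      (LinearMap.toContinuousLinearMap
        (∑ i ∈ I, momentHessian (b i) (P i) x).mulVecLin) x := by
  refine (HasFDerivAt.fun_sum fun i _ => hasFDerivAt_momentMap (b i) (P i) x).congr_fderiv ?_
  ext1 u
  simp

lemma posSemidef_sum_momentHessian (x : ι → ℝ) :
    (∑ i ∈ I, momentHessian (b i) (P i) x).PosSemidef :=
  Matrix.posSemidef_sum _ fun i _ => posSemidef_momentHessian (b i) (P i) x

lemma posDef_sum_momentHessian_iff (x : ι → ℝ) :
    (∑ i ∈ I, momentHessian (b i) (P i) x).PosDef ↔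
      ∀ u ≠ 0, ∃ i ∈ I, ∃ a a', (P i *ᵥ u) a ≠ (P i *ᵥ u) a' := by
  have hnonneg (u : ι → ℝ) (i : κ) : 0 ≤ u ⬝ᵥ (momentHessian (b i) (P i) x *ᵥ u) := by
    simpa only [star_trivial] using
      (posSemidef_momentHessian (b i) (P i) x).dotProduct_mulVec_nonneg u
  simp only [Matrix.posDef_iff_dotProduct_mulVec, (posSemidef_sum_momentHessian I b P x).1,
    true_and, star_trivial, Matrix.sum_mulVec, dotProduct_sum,
    sum_pos_iff_of_nonneg fun i _ => hnonneg _ i]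
  refine forall₂_congr fun u _ => exists_congr fun i => and_congr_right fun _ => ?_
  rw [(hnonneg u i).lt_iff_ne', ne_eq, dotProduct_momentHessian_mulVec_eq_zero_iff]
  push Not
  rfl

variable [DecidableEq ι]

-- Positive definiteness depends only on the directions of the polytopes, not on the point `x`. So
-- the moment map is either injective, by convexity, or everywhere critical, and then the Minkowski
-- sum is a null set.
lemma lintegral_det_sum_momentHessian :
    ∫⁻ x, ENNReal.ofReal (∑ i ∈ I, momentHessian (b i) (P i) x).det =
      volume (∑ i ∈ I, convexHull ℝ (Set.range (P i).row)) := by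
  have hderiv (x : ι → ℝ) := hasFDerivAt_sum_momentMap I b P x
  have hdet (x : ι → ℝ) : (LinearMap.toContinuousLinearMap
      (∑ i ∈ I, momentHessian (b i) (P i) x).mulVecLin).det =
        (∑ i ∈ I, momentHessian (b i) (P i) x).det := by
    rw [ContinuousLinearMap.det, LinearMap.coe_toContinuousLinearMap, ← Matrix.toLin'_apply',
      LinearMap.det_toLin']
  rw [← volume_range_sum_momentMap I b P, ← Set.image_univ]
  by_cases hspan : ∀ u ≠ 0, ∃ i ∈ I, ∃ a a', (P i *ᵥ u) a ≠ (P i *ᵥ u) a'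
  · have hinj := injective_of_hasFDerivAt_posDef hderiv fun x =>
      (posDef_sum_momentHessian_iff I b P x).2 hspan
    rw [← lintegral_abs_det_fderiv_eq_addHaar_image volume MeasurableSet.univ
      (fun x _ => (hderiv x).hasFDerivWithinAt) hinj.injOn, Measure.restrict_univ]
    simp only [hdet, abs_of_nonneg (posSemidef_sum_momentHessian I b P _).det_nonneg]
  · have hdet_zero (x : ι → ℝ) : (∑ i ∈ I, momentHessian (b i) (P i) x).det = 0 := by
      by_contra hne
      exact hspan <| (posDef_sum_momentHessian_iff I b P x).1 <|
        (posSemidef_sum_momentHessian I b P x).posDef_iff_det_ne_zero.2 hne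
    rw [addHaar_image_eq_zero_of_det_fderivWithin_eq_zero volume
      (fun x _ => (hderiv x).hasFDerivWithinAt) fun x _ => (hdet x).trans (hdet_zero x)]
    simp only [hdet_zero, ENNReal.ofReal_zero, lintegral_zero]

lemma continuous_det_sum_momentHessian :
    Continuous fun x => (∑ i ∈ I, momentHessian (b i) (P i) x).det := by
  unfold momentHessian weightCov softmax
  fun_prop (disch := exact fun _ => (sum_exp_pos _).ne')

lemma integrable_det_sum_momentHessian :
    Integrable fun x => (∑ i ∈ I, momentHessian (b i) (P i) x).det := by
  refine (lintegral_ofReal_ne_top_iff_integrable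
    (continuous_det_sum_momentHessian I b P).aestronglyMeasurable
    (.of_forall fun x => (posSemidef_sum_momentHessian I b P x).det_nonneg)).1 ?_
  rw [lintegral_det_sum_momentHessian]
  exact (isCompact_finsetSum I fun i _ =>
    (Set.finite_range (P i).row).isCompact_convexHull (𝕜 := ℝ)).measure_lt_top.ne

lemma integral_det_sum_momentHessian :
    ∫ x, (∑ i ∈ I, momentHessian (b i) (P i) x).det =
      volume.real (∑ i ∈ I, convexHull ℝ (Set.range (P i).row)) := by
  rw [integral_eq_lintegral_of_nonneg_ae
    (.of_forall fun x => (posSemidef_sum_momentHessian I b P x).det_nonneg)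
    (continuous_det_sum_momentHessian I b P).aestronglyMeasurable,
    lintegral_det_sum_momentHessian, Measure.real]

end MinkowskiSum

section MixedDiscriminant

variable {ι κ R : Type*} [Fintype ι] [Fintype κ] [DecidableEq ι] [DecidableEq κ] [CommRing R]

/-- The mixed discriminant of a family of matrices indexed by the same type as their rows. It is
not divided by `(Fintype.card ι)!`, so the value on a constant family `A` is
`(Fintype.card ι)! * A.det`. -/
def mixedDiscriminant (M : ι → Matrix ι ι R) : R :=
  ∑ σ : Equiv.Perm ι, (Matrix.of fun r => M (σ r) r).det

lemma sum_superset_neg_one_pow_card_sub_card (S : Finset ι) :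
    ∑ I with S ⊆ I, (-1 : ℤ) ^ (Fintype.card ι - #I) = if S = univ then 1 else 0 := by
  calc ∑ I with S ⊆ I, (-1 : ℤ) ^ (Fintype.card ι - #I)
      = ∑ J ∈ Sᶜ.powerset, (-1 : ℤ) ^ #J :=
        sum_nbij' compl compl (by simp) (by simp [subset_compl_comm]) (by simp) (by simp)
          (by simp [card_compl])
    _ = if S = univ then 1 else 0 := by
        simp only [sum_powerset_neg_one_pow_card, compl_eq_empty_iff]

lemma sum_neg_one_pow_smul_multilinear {E F : Type*} [AddCommGroup E] [AddCommGroup F] [Module R E]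
    [Module R F] (f : MultilinearMap R (fun _ : ι => E) F) (v : ι → ι → E) :
    ∑ I : Finset ι, (-1 : ℤ) ^ (Fintype.card ι - #I) • f (fun r => ∑ i ∈ I, v r i) =
      ∑ σ : Equiv.Perm ι, f fun r => v r (σ r) := by
  classical
  have hexpand (I : Finset ι) : f (fun r => ∑ i ∈ I, v r i) =
      ∑ g : ι → ι, if univ.image g ⊆ I then f fun r => v r (g r) else 0 := by
    rw [f.map_sum_finset v fun _ => I, ← sum_filter]
    congr 1
    ext g
    simp [image_subset_iff]
  calc ∑ I : Finset ι, (-1 : ℤ) ^ (Fintype.card ι - #I) • f (fun r => ∑ i ∈ I, v r i)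
      = ∑ g : ι → ι, (∑ I with univ.image g ⊆ I, (-1 : ℤ) ^ (Fintype.card ι - #I)) •
          f fun r => v r (g r) := by
        simp only [hexpand, smul_sum, smul_ite, smul_zero, sum_smul, sum_filter, ite_smul,
          zero_smul]
        rw [sum_comm]
    _ = ∑ g : ι → ι with Function.Bijective g, f fun r => v r (g r) := by
        rw [sum_filter]
        simp only [sum_superset_neg_one_pow_card_sub_card, ite_smul, one_smul, zero_smul,
          ← coe_eq_univ, coe_image, coe_univ, Set.image_univ, Set.range_eq_univ,
          Finite.surjective_iff_bijective]
    _ = ∑ σ : Equiv.Perm ι, f fun r => v r (σ r) :=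
        (sum_bij (fun (σ : Equiv.Perm ι) _ => ⇑σ) (fun σ _ => by simp)
          (fun σ _ τ _ h => DFunLike.coe_injective h)
          (fun g hg => ⟨Equiv.ofBijective g (mem_filter.1 hg).2, mem_univ _, rfl⟩)
          fun _ _ => rfl).symm

lemma sum_neg_one_pow_mul_det_sum (M : ι → Matrix ι ι R) :
    ∑ I : Finset ι, (-1) ^ (Fintype.card ι - #I) * (∑ i ∈ I, M i).det = mixedDiscriminant M := by
  rw [mixedDiscriminant]
  refine Eq.trans (sum_congr rfl fun I _ => ?_) (sum_neg_one_pow_smul_multilinear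
    (Matrix.detRowAlternating (R := R)).toMultilinearMap fun r i => M i r)
  have hrow : (∑ i ∈ I, M i) = fun r => ∑ i ∈ I, M i r := by
    ext r j
    simp [Matrix.sum_apply]
  simp [hrow, zsmul_eq_mul, Matrix.det]

-- A permutation contributes only if it preserves the two blocks, since otherwise it selects a
-- zero row.
lemma mixedDiscriminant_of_inl_eq_fromBlocks {A : ι → Matrix ι ι R}
    {M : ι ⊕ κ → Matrix (ι ⊕ κ) (ι ⊕ κ) R}
    (hM : ∀ i, M (Sum.inl i) = Matrix.fromBlocks (A i) 0 0 0) :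
    mixedDiscriminant M =
      mixedDiscriminant A * mixedDiscriminant fun j => (M (Sum.inr j)).toBlocks₂₂ := by
  simp only [mixedDiscriminant]
  rw [sum_mul_sum, ← Fintype.sum_prod_type']
  symm
  refine Fintype.sum_of_injective (Equiv.Perm.sumCongrHom ι κ) Equiv.Perm.sumCongrHom_injective
    _ _ (fun σ hσ => ?_) fun ⟨σ, τ⟩ => ?_
  · have hinv : σ⁻¹ ∉ (Equiv.Perm.sumCongrHom ι κ).range := fun h => hσ (inv_mem_iff.1 h)
    have hnot := mt Equiv.Perm.mem_sumCongrHom_range_of_perm_mapsTo_inl hinv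
    obtain ⟨a, b, hab⟩ : ∃ a b, σ (Sum.inr b) = Sum.inl a := by
      contrapose! hnot
      rintro _ ⟨a, rfl⟩
      rcases h : σ⁻¹ (Sum.inl a) with i | b
      · exact ⟨i, rfl⟩
      · exact absurd (Equiv.Perm.eq_inv_iff_eq.1 h.symm) (hnot a b)
    refine Matrix.det_eq_zero_of_row_eq_zero (Sum.inr b) fun c => ?_
    rcases c with c | c <;> simp [hab, hM]
  · rw [← Matrix.det_fromBlocks_zero₁₂ _
      (Matrix.of fun r c => M (Sum.inr (τ r)) (Sum.inr r) (Sum.inl c))]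
    congr 1
    ext (r | r) (c | c) <;> simp [hM, Matrix.toBlocks₂₂]

end MixedDiscriminant

section MixedVolume

variable {E F κ κ' : Type*} [AddCommMonoid E] [MeasureSpace E] [AddCommMonoid F] [MeasureSpace F]
  [Fintype κ] [Fintype κ']

/-- The mixed volume of a finite family of sets in any measure space with an addition, normalized as
in `mixedVol`: the value on a constant family of `d` copies of a convex body `K` in a
`d`-dimensional space is `d!` times the volume of `K`. -/
noncomputable def mixedVolume (K : κ → Set E) : ℝ :=
  ∑ I : Finset κ, (-1) ^ (Fintype.card κ - #I) * volume.real (∑ i ∈ I, K i)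

lemma mixedVol_eq_mixedVolume {n m : ℕ} (P : Fin m → Set (Fin n → ℝ)) :
    mixedVol P = mixedVolume P := by
  simp only [mixedVol, mixedVolume, Fintype.card_fin, Measure.real]

lemma mixedVolume_comp_equiv (e : κ' ≃ κ) (K : κ → Set E) :
    mixedVolume (fun i => K (e i)) = mixedVolume K :=
  Fintype.sum_equiv e.finsetCongr _ _ fun I => by
    simp [Equiv.finsetCongr_apply, sum_map, Fintype.card_congr e]

lemma mixedVolume_image {f : E →+ F} (hf : ∀ S, volume (f '' S) = volume S) (K : κ → Set E) :
    mixedVolume (fun i => f '' K i) = mixedVolume K := by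
  simp only [mixedVolume, ← Set.image_finsetSum, Measure.real, hf]

end MixedVolume

section BlockFactorization

open scoped Matrix

variable {ι κ : Type*} [Fintype ι] [Fintype κ]

lemma integral_mixedDiscriminant_momentHessian [DecidableEq ι] {α : ι → Type*}
    [∀ i, Fintype (α i)] [∀ i, Nonempty (α i)] [∀ i, DecidableEq (α i)]
    (b : ∀ i, α i → ℝ) (P : ∀ i, Matrix (α i) ι ℝ) :
    ∫ x, (mixedDiscriminant fun i => momentHessian (b i) (P i) x) =
      mixedVolume fun i => convexHull ℝ (Set.range (P i).row) := by
  simp only [mixedVolume, ← sum_neg_one_pow_mul_det_sum, ← integral_det_sum_momentHessian _ b P,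
    ← integral_const_mul]
  exact integral_finsetSum _ fun I _ => (integrable_det_sum_momentHessian I b P).const_mul _

lemma integrable_mixedDiscriminant_momentHessian [DecidableEq ι] {α : ι → Type*}
    [∀ i, Fintype (α i)] [∀ i, Nonempty (α i)] [∀ i, DecidableEq (α i)]
    (b : ∀ i, α i → ℝ) (P : ∀ i, Matrix (α i) ι ℝ) :
    Integrable fun x => mixedDiscriminant fun i => momentHessian (b i) (P i) x := by
  simp only [← sum_neg_one_pow_mul_det_sum]
  exact integrable_finsetSum _ fun I _ => (integrable_det_sum_momentHessian I b P).const_mul _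

lemma integral_eq_integral_integral_sumElim {X G : Type*} [MeasureSpace X]
    [SigmaFinite (volume : Measure X)] [NormedAddCommGroup G] [NormedSpace ℝ G]
    {f : (ι ⊕ κ → X) → G} (hf : Integrable f) :
    ∫ x, f x = ∫ y, ∫ z, f (Sum.elim y z) := by
  have hmp := volume_measurePreserving_sumPiEquivProdPi_symm fun _ : ι ⊕ κ => X
  have hcoe (q : (ι → X) × (κ → X)) :
      (MeasurableEquiv.sumPiEquivProdPi fun _ : ι ⊕ κ => X).symm q = Sum.elim q.1 q.2 := by
    ext (i | j) <;> rfl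
  rw [← hmp.integral_comp (MeasurableEquiv.measurableEmbedding _)]
  simp only [hcoe]
  have hint := hmp.integrable_comp_of_integrable hf
  simp only [Function.comp_def, hcoe] at hint
  exact integral_prod _ hint

lemma mulVec_sumElim {α R : Type*} [Semiring R] (P : Matrix α (ι ⊕ κ) R)
    (y : ι → R) (z : κ → R) :
    P *ᵥ Sum.elim y z = P.toCols₁ *ᵥ y + P.toCols₂ *ᵥ z := by
  conv_lhs => rw [← P.fromCols_toCols, Matrix.fromCols_mulVec]
  rfl

section Hessian

variable {α : Type*} [Fintype α] [DecidableEq α] (b : α → ℝ) {P : Matrix α (ι ⊕ κ) ℝ}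
  (y : ι → ℝ) (z : κ → ℝ)

lemma momentHessian_sumElim_of_toCols₂_eq_zero (hP : P.toCols₂ = 0) :
    momentHessian b P (Sum.elim y z) = Matrix.fromBlocks (momentHessian b P.toCols₁ y) 0 0 0 := by
  rw [momentHessian, mulVec_sumElim, hP, Matrix.zero_mulVec, add_zero]
  conv_lhs => rw [← P.fromCols_toCols, hP]
  simp [momentHessian, Matrix.transpose_fromCols, Matrix.fromRows_mul,
    ← Matrix.fromCols_fromRows_eq_fromBlocks]

lemma toBlocks₂₂_momentHessian_sumElim :
    (momentHessian b P (Sum.elim y z)).toBlocks₂₂ =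
      momentHessian (b + P.toCols₁ *ᵥ y) P.toCols₂ z := by
  rw [momentHessian, mulVec_sumElim, ← add_assoc]
  rfl

end Hessian

-- The first coordinates `y` enter the Hessians indexed by `κ` only through a shift of `b`, and the
-- inner integral is a mixed volume, which does not depend on `b`.
lemma mixedVolume_convexHull_eq_mul {α : ι ⊕ κ → Type*} [∀ i, Finite (α i)]
    [∀ i, Nonempty (α i)] (P : ∀ i, Matrix (α i) (ι ⊕ κ) ℝ)
    (hP : ∀ i, (P (Sum.inl i)).toCols₂ = 0) :
    mixedVolume (fun i => convexHull ℝ (Set.range (P i).row)) =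
      mixedVolume (fun i => convexHull ℝ (Set.range (P (Sum.inl i)).toCols₁.row)) *
        mixedVolume (fun j => convexHull ℝ (Set.range (P (Sum.inr j)).toCols₂.row)) := by
  classical
  have (i : ι ⊕ κ) : Fintype (α i) := Fintype.ofFinite (α i)
  let D₁ (y : ι → ℝ) := mixedDiscriminant fun i => momentHessian 0 (P (Sum.inl i)).toCols₁ y
  let D₂ (y : ι → ℝ) (z : κ → ℝ) := mixedDiscriminant fun j =>
    momentHessian (0 + (P (Sum.inr j)).toCols₁ *ᵥ y) (P (Sum.inr j)).toCols₂ z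
  have hfactor (y : ι → ℝ) (z : κ → ℝ) :
      (mixedDiscriminant fun i => momentHessian 0 (P i) (Sum.elim y z)) = D₁ y * D₂ y z := by
    rw [mixedDiscriminant_of_inl_eq_fromBlocks fun i =>
      momentHessian_sumElim_of_toCols₂_eq_zero 0 y z (hP i)]
    simp only [toBlocks₂₂_momentHessian_sumElim, D₁, D₂]
  calc mixedVolume (fun i => convexHull ℝ (Set.range (P i).row))
      = ∫ x, (mixedDiscriminant fun i => momentHessian 0 (P i) x) :=
        (integral_mixedDiscriminant_momentHessian _ P).symm
    _ = ∫ y, ∫ z, D₁ y * D₂ y z := by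
        rw [integral_eq_integral_integral_sumElim
          (integrable_mixedDiscriminant_momentHessian _ P)]
        simp only [hfactor]
    _ = ∫ y, D₁ y * mixedVolume fun j => convexHull ℝ (Set.range (P (Sum.inr j)).toCols₂.row) := by
        simp only [integral_const_mul, D₂, integral_mixedDiscriminant_momentHessian]
    _ = _ := by rw [integral_mul_const, integral_mixedDiscriminant_momentHessian]

end BlockFactorization

section Polytope

variable {E F : Type*} [AddCommGroup E] [Module ℝ E] [AddCommGroup F] [Module ℝ F]

/-- A nonempty polytope: the convex hull of a nonempty finite set. -/
def IsPolytope (K : Set E) : Prop :=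
  ∃ V : Finset E, V.Nonempty ∧ K = convexHull ℝ (V : Set E)

lemma IsPolytope.image {K : Set E} (hK : IsPolytope K) (f : E →ₗ[ℝ] F) : IsPolytope (f '' K) := by
  classical
  obtain ⟨V, hV, rfl⟩ := hK
  exact ⟨V.image f, hV.image f, by rw [coe_image, f.image_convexHull]⟩

lemma IsLatticePolytope.isPolytope {n : ℕ} {K : Set (Fin n → ℝ)} (hK : IsLatticePolytope K) :
    IsPolytope K := by
  obtain ⟨V, hV, -, hKV⟩ := hK
  exact ⟨V, hV, hKV⟩

lemma convexHull_range_row_submatrix {α ι τ : Type*} (P : Matrix α ι ℝ) (s : τ → ι) :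
    convexHull ℝ (Set.range (P.submatrix id s).row) =
      (fun x r => x (s r)) '' convexHull ℝ (Set.range P.row) :=
  (congrArg (convexHull ℝ) (Set.range_comp (LinearMap.funLeft ℝ ℝ s) P.row)).trans
    (LinearMap.image_convexHull _ _).symm

lemma mixedVolume_eq_mul_of_forall_inr_eq_zero {ι κ : Type*} [Fintype ι] [Fintype κ]
    {K : ι ⊕ κ → Set (ι ⊕ κ → ℝ)} (hK : ∀ i, IsPolytope (K i))
    (hK_inl : ∀ i, ∀ x ∈ K (Sum.inl i), ∀ j, x (Sum.inr j) = 0) :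
    mixedVolume K =
      mixedVolume (fun i => (fun x r => x (Sum.inl r)) '' K (Sum.inl i)) *
        mixedVolume (fun j => (fun x r => x (Sum.inr r)) '' K (Sum.inr j)) := by
  choose V hV hKV using hK
  have (i : ι ⊕ κ) : Nonempty (V i) := (hV i).to_subtype
  let P (i : ι ⊕ κ) : Matrix (V i) (ι ⊕ κ) ℝ := Matrix.of Subtype.val
  obtain rfl : K = fun i => convexHull ℝ (Set.range (P i).row) :=
    funext fun i => (hKV i).trans (congrArg (convexHull ℝ) Subtype.range_coe.symm)
  have hP (i : ι) : (P (Sum.inl i)).toCols₂ = 0 := by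
    ext v j
    exact hK_inl i v (subset_convexHull ℝ _ (Set.mem_range_self v)) j
  simp only [← convexHull_range_row_submatrix]
  exact mixedVolume_convexHull_eq_mul P hP

end Polytope

section Coordinates

lemma volume_image_comp_equiv {ι κ X : Type*} [Fintype ι] [Fintype κ] [MeasureSpace X]
    [SigmaFinite (volume : Measure X)] (e : ι ≃ κ) (S : Set (κ → X)) :
    volume ((fun x i => x (e i)) '' S) = volume S := by
  have hmp := volume_preserving_arrowCongr' e.symm (MeasurableEquiv.refl X) (.id volume)
  exact (hmp.measure_preimage_equiv _).symm.trans (congrArg volume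
    (Set.preimage_image_eq S (MeasurableEquiv.injective _)))

variable {n : ℕ}

lemma exists_int_eq_det_of_isLatticePt {f : (Fin n → ℝ) →ₗ[ℝ] (Fin n → ℝ)}
    (hf : ∀ x, IsLatticePt x → IsLatticePt (f x)) : ∃ z : ℤ, LinearMap.det f = z := by
  have hentry (i j : Fin n) : ∃ z : ℤ, LinearMap.toMatrix' f i j = z := by
    rw [LinearMap.toMatrix'_apply]
    refine hf _ (fun l => ⟨Pi.single (M := fun _ => ℤ) j 1 l, ?_⟩) i
    by_cases h : l = j <;> simp [h]
  choose A hA using hentry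
  refine ⟨(Matrix.of A).det, ?_⟩
  rw [← LinearMap.det_toMatrix', Int.cast_det]
  congr 1
  ext i j
  exact hA i j

lemma abs_det_eq_one_of_isLatticePt_iff {φ : (Fin n → ℝ) ≃ₗ[ℝ] (Fin n → ℝ)}
    (hφ : ∀ x, IsLatticePt x ↔ IsLatticePt (φ x)) :
    |LinearMap.det (φ : (Fin n → ℝ) →ₗ[ℝ] (Fin n → ℝ))| = 1 := by
  obtain ⟨a, ha⟩ := exists_int_eq_det_of_isLatticePt fun x => (hφ x).1
  obtain ⟨b, hb⟩ := exists_int_eq_det_of_isLatticePt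
    (f := (φ.symm : (Fin n → ℝ) →ₗ[ℝ] (Fin n → ℝ))) fun x hx => (hφ _).2 <| by simpa using hx
  have hab : a * b = 1 := by
    have := LinearEquiv.det_mul_det_symm φ
    rw [ha, hb] at this
    exact_mod_cast this
  rw [ha, ← Int.cast_abs, Int.isUnit_iff_abs_eq.1 (.of_mul_eq_one b hab), Int.cast_one]

end Coordinates

theorem mixedVol_mul_of_subspace_general {n k : ℕ} (hkn : k ≤ n)
    (L : Submodule ℝ (Fin n → ℝ))
    (P : Fin n → Set (Fin n → ℝ)) (hP : ∀ i, IsPolytope (P i))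
    (hPL : ∀ i : Fin n, (i : ℕ) < k → P i ⊆ (L : Set (Fin n → ℝ)))
    (φ : (Fin n → ℝ) →ₗ[ℝ] (Fin n → ℝ)) (hφ : |LinearMap.det φ| = 1)
    (hφL : ∀ x ∈ L, ∀ j : Fin n, k ≤ (j : ℕ) → φ x j = 0) :
    mixedVol P =
      mixedVol (fun i : Fin k =>
          (fun x (j : Fin k) => x (Fin.castLE hkn j)) '' (⇑φ '' P (Fin.castLE hkn i))) *
      mixedVol (fun i : Fin (n - k) =>
          (fun x (j : Fin (n - k)) => x (Fin.cast (Nat.add_sub_cancel' hkn) (Fin.natAdd k j))) ''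
            (⇑φ '' P (Fin.cast (Nat.add_sub_cancel' hkn) (Fin.natAdd k i)))) := by
  let e : Fin k ⊕ Fin (n - k) ≃ Fin n :=
    finSumFinEquiv.trans (finCongr (Nat.add_sub_cancel' hkn))
  let ψ : (Fin n → ℝ) →ₗ[ℝ] (Fin k ⊕ Fin (n - k) → ℝ) := LinearMap.funLeft ℝ ℝ e ∘ₗ φ
  have hψ (S : Set (Fin n → ℝ)) : volume (ψ '' S) = volume S :=
    calc volume (ψ '' S) = volume ((fun x i => x (e i)) '' (φ '' S)) :=
          congrArg volume (Set.image_comp (LinearMap.funLeft ℝ ℝ e) φ S)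
      _ = volume (φ '' S) := volume_image_comp_equiv e _
      _ = volume S := by rw [Measure.addHaar_image_linearMap, hφ, ENNReal.ofReal_one, one_mul]
  have hψ_inl (i : Fin k) : ∀ y ∈ ψ '' P (e (Sum.inl i)), ∀ j, y (Sum.inr j) = 0 := by
    rintro _ ⟨x, hx, rfl⟩ j
    exact hφL x (hPL (e (Sum.inl i)) i.2 hx) (e (Sum.inr j)) (Nat.le_add_right k j)
  simp only [mixedVol_eq_mixedVolume]
  rw [← mixedVolume_comp_equiv e, ← mixedVolume_image (f := ψ.toAddMonoidHom) hψ]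
  refine (mixedVolume_eq_mul_of_forall_inr_eq_zero
    (K := fun i => ψ '' P (e i)) (fun i => (hP _).image ψ) hψ_inl).trans ?_
  simp only [Set.image_image]
  rfl

/-- multiplicativity of the mixed volume when the first k polytopes lie in
a k-dimensional rational subspace L. The subspace is brought into the coordinate form
{x : x_j = 0 for j ≥ k} by a lattice-preserving linear automorphism φ, so that the mixed
volume of P₁,…,P_k inside L (w.r.t. the lattice L ∩ ℤⁿ) is computed in the first k
coordinates and the mixed volume of the projections π(P_{k+1}),…,π(Pₙ) (w.r.t. the
quotient lattice) in the last n−k coordinates. -/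
theorem mixedVol_mul_of_subspace {n k : ℕ} (hk1 : 1 ≤ k) (hkn : k ≤ n)
    (L : Submodule ℝ (Fin n → ℝ))
    (hLdim : Module.finrank ℝ L = k)
    (hLrat : L = Submodule.span ℝ ((L : Set (Fin n → ℝ)) ∩ {x | IsLatticePt x}))
    (P : Fin n → Set (Fin n → ℝ)) (hP : ∀ i, IsLatticePolytope (P i))
    (hPL : ∀ i : Fin n, (i : ℕ) < k → P i ⊆ (L : Set (Fin n → ℝ)))
    (φ : (Fin n → ℝ) ≃ₗ[ℝ] (Fin n → ℝ))
    (hφlat : ∀ x, IsLatticePt x ↔ IsLatticePt (φ x))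
    (hφL : ∀ x, x ∈ L ↔ ∀ j : Fin n, k ≤ (j : ℕ) → φ x j = 0) :
    mixedVol P =
      mixedVol (fun i : Fin k =>
          (fun x (j : Fin k) => x (Fin.castLE hkn j)) '' (⇑φ '' P (Fin.castLE hkn i))) *
      mixedVol (fun i : Fin (n - k) =>
          (fun x (j : Fin (n - k)) => x (Fin.cast (Nat.add_sub_cancel' hkn) (Fin.natAdd k j))) ''
            (⇑φ '' P (Fin.cast (Nat.add_sub_cancel' hkn) (Fin.natAdd k i)))) := by
  exact mixedVol_mul_of_subspace_general hkn L P (fun i => (hP i).isPolytope) hPL φ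
    (abs_det_eq_one_of_isLatticePt_iff hφlat) fun x => (hφL x).1
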